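/- Let Σ, G and Γ(s) be as in the Blanchard polynomial model described in the context. Then the set of points s ∈ ℂ for which there exists a pair (p, q) ∈ Σ ∖ G with (p(s), q(s)) ∈ Γ(s) is countable. Consequently, for every s outside a countable subset of ℂ one has { (p, q) ∈ Σ : (p(s), q(s)) ∈ Γ(s) } = G. -/

import Mathlib

open Polynomial

/-- The fiberwise lattice `Γ(s) ⊆ ℂ²`, generated by the values at `s` of the four sections
`(σ₀, σ₁)`, `(i·σ₀, −i·σ₁)`, `(−σ₁, σ₀)`, `(−i·σ₁, −i·σ₀)` of the Blanchard construction. -/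
noncomputable def Gam (σ₀ σ₁ : Polynomial ℂ) (s : ℂ) : AddSubgroup (ℂ × ℂ) :=
  AddSubgroup.closure
    { (σ₀.eval s, σ₁.eval s),
      (Complex.I * σ₀.eval s, -(Complex.I * σ₁.eval s)),
      (-(σ₁.eval s), σ₀.eval s),
      (-(Complex.I * σ₁.eval s), -(Complex.I * σ₀.eval s)) }

/-- Evaluation of a pair of polynomials at `s`, as an additive group homomorphism. -/
noncomputable def evalPair (s : ℂ) : (Polynomial ℂ × Polynomial ℂ) →+ ℂ × ℂ :=
  AddMonoidHom.prodMap (Polynomial.evalRingHom s).toAddMonoidHom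
    (Polynomial.evalRingHom s).toAddMonoidHom

/-- The group `Σ` of pairs `(p, q)` of polynomials of degree at most `a` whose value at each
`tᵢ` lies in the lattice `Γ(tᵢ)`. -/
noncomputable def Sig (a : ℕ) (t : Fin (a + 1) → ℂ) (σ₀ σ₁ : Polynomial ℂ) :
    AddSubgroup (Polynomial ℂ × Polynomial ℂ) :=
  AddSubgroup.prod (Polynomial.degreeLE ℂ (a : WithBot ℕ)).toAddSubgroup
      (Polynomial.degreeLE ℂ (a : WithBot ℕ)).toAddSubgroup ⊓
    ⨅ i : Fin (a + 1), AddSubgroup.comap (evalPair (t i)) (Gam σ₀ σ₁ (t i))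

/-- The subgroup `G` generated by the four pairs
`(σ₀, σ₁)`, `(i·σ₀, −i·σ₁)`, `(−σ₁, σ₀)`, `(−i·σ₁, −i·σ₀)`. -/
noncomputable def Gsub (σ₀ σ₁ : Polynomial ℂ) : AddSubgroup (Polynomial ℂ × Polynomial ℂ) :=
  AddSubgroup.closure
    { (σ₀, σ₁),
      (Polynomial.C Complex.I * σ₀, -(Polynomial.C Complex.I * σ₁)),
      (-σ₁, σ₀),
      (-(Polynomial.C Complex.I * σ₁), -(Polynomial.C Complex.I * σ₀)) }

theorem Gam_eq_map (σ₀ σ₁ : Polynomial ℂ) (s : ℂ) :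
    Gam σ₀ σ₁ s = (Gsub σ₀ σ₁).map (evalPair s) := by
  rw [Gsub, AddMonoidHom.map_closure, Gam]
  congr 1
  simp [Set.image_insert_eq, evalPair]

theorem closure_four_countable {A : Type*} [AddCommGroup A] (u v w z : A) :
    (AddSubgroup.closure {u, v, w, z} : Set A).Countable := by
  refine (Set.countable_range
    (fun n : ℤ × ℤ × ℤ × ℤ => n.1 • u + n.2.1 • v + n.2.2.1 • w + n.2.2.2 • z)).mono ?_
  intro x hx
  induction hx using AddSubgroup.closure_induction with
  | mem x hx =>
    rcases hx with rfl | rfl | rfl | rfl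
    · exact ⟨(1, 0, 0, 0), by simp⟩
    · exact ⟨(0, 1, 0, 0), by simp⟩
    · exact ⟨(0, 0, 1, 0), by simp⟩
    · exact ⟨(0, 0, 0, 1), by simp⟩
  | zero => exact ⟨0, by simp⟩
  | add x y _ _ hx hy =>
    obtain ⟨m, rfl⟩ := hx
    obtain ⟨n, rfl⟩ := hy
    exact ⟨m + n, by simp only [Prod.fst_add, Prod.snd_add, add_smul]; abel⟩
  | neg x _ hx =>
    obtain ⟨m, rfl⟩ := hx
    exact ⟨-m, by simp only [Prod.fst_neg, Prod.snd_neg, neg_smul]; abel⟩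

theorem Gsub_countable (σ₀ σ₁ : Polynomial ℂ) :
    (Gsub σ₀ σ₁ : Set (Polynomial ℂ × Polynomial ℂ)).Countable := by
  exact closure_four_countable _ _ _ _

theorem Gam_countable (σ₀ σ₁ : Polynomial ℂ) (s : ℂ) :
    (Gam σ₀ σ₁ s : Set (ℂ × ℂ)).Countable := by
  rw [Gam_eq_map]
  exact (Gsub_countable σ₀ σ₁).image _

theorem mem_Sig_iff (a : ℕ) (t : Fin (a + 1) → ℂ) (σ₀ σ₁ : Polynomial ℂ)
    (x : Polynomial ℂ × Polynomial ℂ) :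
    x ∈ Sig a t σ₀ σ₁ ↔ (x.1.degree ≤ (a : WithBot ℕ) ∧ x.2.degree ≤ (a : WithBot ℕ)) ∧
      ∀ i, evalPair (t i) x ∈ Gam σ₀ σ₁ (t i) := by
  simp [Sig, AddSubgroup.mem_prod, AddSubgroup.mem_iInf, Polynomial.mem_degreeLE]

theorem poly_ext (a : ℕ) (t : Fin (a + 1) → ℂ) (ht : Function.Injective t)
    (p q : Polynomial ℂ) (hp : p.degree ≤ (a : WithBot ℕ)) (hq : q.degree ≤ (a : WithBot ℕ))
    (h : ∀ i, p.eval (t i) = q.eval (t i)) : p = q := by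
  have hlt : (a : WithBot ℕ) < ((Finset.univ : Finset (Fin (a + 1))).card : WithBot ℕ) := by
    rw [Finset.card_univ, Fintype.card_fin]
    exact_mod_cast Nat.lt_succ_self a
  exact Polynomial.eq_of_degrees_lt_of_eval_index_eq Finset.univ ht.injOn
    (hp.trans_lt hlt) (hq.trans_lt hlt) (fun i _ => h i)

theorem Sig_countable (a : ℕ) (t : Fin (a + 1) → ℂ) (ht : Function.Injective t)
    (σ₀ σ₁ : Polynomial ℂ) :
    (Sig a t σ₀ σ₁ : Set (Polynomial ℂ × Polynomial ℂ)).Countable := by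
  have hc : (Set.pi Set.univ fun i => (Gam σ₀ σ₁ (t i) : Set (ℂ × ℂ))).Countable :=
    Set.countable_univ_pi fun i => Gam_countable _ _ _
  refine Set.MapsTo.countable_of_injOn (f := fun x i => evalPair (t i) x) ?_ ?_ hc
  · intro x hx i _
    exact ((mem_Sig_iff _ _ _ _ _).1 hx).2 i
  · intro x hx y hy hxy
    have hx' := ((mem_Sig_iff _ _ _ _ _).1 hx).1
    have hy' := ((mem_Sig_iff _ _ _ _ _).1 hy).1
    exact Prod.ext
      (poly_ext a t ht _ _ hx'.1 hy'.1 fun i => congrArg Prod.fst (congrFun hxy i))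
      (poly_ext a t ht _ _ hx'.2 hy'.2 fun i => congrArg Prod.snd (congrFun hxy i))

theorem zeros_countable (x : Polynomial ℂ × Polynomial ℂ) (hx : x ≠ 0) :
    {s : ℂ | evalPair s x = 0}.Countable := by
  by_cases h : x.1 = 0
  · have h2 : x.2 ≠ 0 := fun h2 => hx (Prod.ext h h2)
    refine ((Polynomial.finite_setOfPred_isRoot h2).subset ?_).countable
    intro s hs
    exact congrArg Prod.snd hs
  · refine ((Polynomial.finite_setOfPred_isRoot h).subset ?_).countable
    intro s hs
    exact congrArg Prod.fst hs

theorem Gsub_le_Sig (a : ℕ) (t : Fin (a + 1) → ℂ) (σ₀ σ₁ : Polynomial ℂ)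
    (h0 : σ₀.degree ≤ (a : WithBot ℕ)) (h1 : σ₁.degree ≤ (a : WithBot ℕ)) :
    Gsub σ₀ σ₁ ≤ Sig a t σ₀ σ₁ := by
  refine le_inf ?_ (le_iInf fun i => ?_)
  · have hI : ∀ p : Polynomial ℂ, (Polynomial.C Complex.I * p).degree = p.degree := fun p =>
      Polynomial.degree_C_mul Complex.I_ne_zero
    unfold Gsub
    rw [AddSubgroup.closure_le]
    rintro x (rfl | rfl | rfl | rfl) <;>
      simp [AddSubgroup.mem_prod, Polynomial.mem_degreeLE, hI, h0, h1]
  · rw [Gam_eq_map]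
    exact AddSubgroup.le_comap_map _ _

/-- The set of points `s ∈ ℂ` at which some pair `(p, q) ∈ Σ ∖ G` takes a
value in the lattice `Γ(s)` is countable; consequently, for every `s` outside a countable
subset of `ℂ`, one has `{ (p, q) ∈ Σ : (p(s), q(s)) ∈ Γ(s) } = G`. -/
theorem countable_exceptional_parameter_set
    (a : ℕ) (ha : 1 ≤ a) (t : Fin (a + 1) → ℂ) (ht : Function.Injective t)
    (σ₀ σ₁ : Polynomial ℂ)
    (h0 : σ₀.degree ≤ (a : WithBot ℕ)) (h1 : σ₁.degree ≤ (a : WithBot ℕ))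
    (hnz : ∀ i, (σ₀.eval (t i), σ₁.eval (t i)) ≠ (0, 0)) :
    Set.Countable {s : ℂ | ∃ x ∈ Sig a t σ₀ σ₁, x ∉ Gsub σ₀ σ₁ ∧
        (x.1.eval s, x.2.eval s) ∈ Gam σ₀ σ₁ s} ∧
      ∃ S : Set ℂ, S.Countable ∧ ∀ s ∉ S,
        {x : Polynomial ℂ × Polynomial ℂ |
            x ∈ Sig a t σ₀ σ₁ ∧ (x.1.eval s, x.2.eval s) ∈ Gam σ₀ σ₁ s}
          = (Gsub σ₀ σ₁ : Set (Polynomial ℂ × Polynomial ℂ)) := by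
  have hC : Set.Countable {s : ℂ | ∃ x ∈ Sig a t σ₀ σ₁, x ∉ Gsub σ₀ σ₁ ∧
        (x.1.eval s, x.2.eval s) ∈ Gam σ₀ σ₁ s} := by
    have hU : (⋃ x ∈ (Sig a t σ₀ σ₁ : Set (Polynomial ℂ × Polynomial ℂ)),
        ⋃ g ∈ (Gsub σ₀ σ₁ : Set (Polynomial ℂ × Polynomial ℂ)),
          {s : ℂ | x ≠ g ∧ evalPair s (x - g) = 0}).Countable := by
      refine (Sig_countable a t ht σ₀ σ₁).biUnion fun x _ =>
        (Gsub_countable σ₀ σ₁).biUnion fun g _ => ?_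
      by_cases hxg : x = g
      · simp [hxg]
      · exact (zeros_countable (x - g) (sub_ne_zero.2 hxg)).mono fun s hs => hs.2
    refine hU.mono ?_
    rintro s ⟨x, hx, hxG, hs⟩
    rw [Gam_eq_map] at hs
    obtain ⟨g, hg, hgs⟩ := hs
    simp only [Set.mem_iUnion]
    refine ⟨x, hx, g, hg, fun h => hxG (h ▸ hg), ?_⟩
    rw [map_sub, hgs]
    exact sub_self _
  refine ⟨hC, _, hC, fun s hs => ?_⟩
  ext x
  constructor
  · rintro ⟨hx, hxs⟩
    by_contra hxG
    exact hs ⟨x, hx, hxG, hxs⟩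
  · intro hx
    refine ⟨Gsub_le_Sig a t σ₀ σ₁ h0 h1 hx, ?_⟩
    rw [Gam_eq_map]
    exact ⟨x, hx, rfl⟩
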